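/- Let x_s > 0, x_q > 0 with x_s² ≥ 4·x_q², and let x_h ≥ x_s/2 satisfy g₀₀(x_h) = 0. Then x₊ ≤ x_h ≤ x_s, where x₊ := (1/2)·(x_s + √(x_s² − 4·x_q²)) is the outer Reissner–Nordström horizon radius. (Equivalently, the Born–Infeld horizon area 4π x_h² is sandwiched between the outer Reissner–Nordström area 4π x₊² and the Schwarzschild area 4π x_s².) -/

import Mathlib

/-!
Integrating `d/dt [t (√(t⁴+1) - t²) / 2] = 3/2 (√(t⁴+1) - t²) - 1/√(t⁴+1)` over `(x, ∞)` turns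
the definition of `f` into `f x = 2x ∫_x^∞ (√(t⁴+1) - t²) dt` (`f_eq`). The integrand lies between
`0` and `1/(2t²)`, whence `0 ≤ f x ≤ 1`. The horizon equation reads
`x² - x_s x + x_q² f x = 0`: from `f ≥ 0` one gets `x ≤ x_s`, and from `f ≤ 1`
one gets `(2x - x_s)² ≥ x_s² - 4 x_q²`, which gives the lower bound because `2x ≥ x_s`.
-/

open Real MeasureTheory

/-- The metric function `f` of the Einstein-Born-Infeld black hole. -/
noncomputable def f (x : ℝ) : ℝ :=
  (2 / 3) * (x ^ 4 - x ^ 2 * Real.sqrt (x ^ 4 + 1))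
    + (4 / 3) * x * ∫ t in Set.Ioi x, 1 / Real.sqrt (t ^ 4 + 1)

/-- The time-time metric component `g₀₀(x) = 1 - x_s/x + (x_q^2/x^2) * f x`
of the Einstein-Born-Infeld black hole, in dimensionless variables. -/
noncomputable def g₀₀ (xs xq : ℝ) (x : ℝ) : ℝ :=
  1 - xs / x + (xq ^ 2 / x ^ 2) * f x

namespace HorizonSandwich

lemma sq_le_sqrt (t : ℝ) : t ^ 2 ≤ √(t ^ 4 + 1) :=
  Real.le_sqrt_of_sq_le (by nlinarith)

lemma sqrt_sub_sq_le {t : ℝ} (ht : 0 < t) : √(t ^ 4 + 1) - t ^ 2 ≤ (1 / 2) * t ^ (-2 : ℝ) := by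
  have h1 : √(t ^ 4 + 1) ≤ t ^ 2 + 1 / (2 * t ^ 2) := by
    apply Real.sqrt_le_iff.2 ⟨by positivity, ?_⟩
    have : (t ^ 2 + 1 / (2 * t ^ 2)) ^ 2 = t ^ 4 + 1 + (1 / (2 * t ^ 2)) ^ 2 := by
      field_simp
      ring
    rw [this]
    nlinarith [sq_nonneg (1 / (2 * t ^ 2))]
  have h2 : (1 / 2) * t ^ (-2 : ℝ) = 1 / (2 * t ^ 2) := by
    rw [Real.rpow_neg ht.le, Real.rpow_two]
    field_simp
  linarith

lemma continuous_sqrt_quartic : Continuous fun t : ℝ => √(t ^ 4 + 1) := by fun_prop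

lemma integrableOn_inv_sqrt {x : ℝ} (hx : 0 < x) :
    IntegrableOn (fun t : ℝ => 1 / √(t ^ 4 + 1)) (Set.Ioi x) := by
  refine (integrableOn_Ioi_rpow_of_lt (by norm_num : (-2 : ℝ) < -1) hx).mono' ?_ ?_
  · refine (Continuous.div continuous_const continuous_sqrt_quartic ?_).aestronglyMeasurable
    intro t
    positivity
  · refine (ae_restrict_iff' measurableSet_Ioi).2 (.of_forall fun t ht => ?_)
    have ht0 : 0 < t := hx.trans ht
    rw [Real.norm_of_nonneg (by positivity), Real.rpow_neg ht0.le, Real.rpow_two, ← one_div]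
    exact one_div_le_one_div_of_le (by positivity) (sq_le_sqrt t)

lemma integrableOn_sqrt_sub_sq {x : ℝ} (hx : 0 < x) :
    IntegrableOn (fun t : ℝ => √(t ^ 4 + 1) - t ^ 2) (Set.Ioi x) := by
  refine ((integrableOn_Ioi_rpow_of_lt (by norm_num : (-2 : ℝ) < -1) hx).const_mul (1 / 2)).mono'
    (by fun_prop) ?_
  refine (ae_restrict_iff' measurableSet_Ioi).2 (.of_forall fun t ht => ?_)
  rw [Real.norm_of_nonneg (sub_nonneg.2 (sq_le_sqrt t))]
  exact sqrt_sub_sq_le (hx.trans ht)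

lemma hasDerivAt_primitive (t : ℝ) :
    HasDerivAt (fun t : ℝ => t / 2 * (√(t ^ 4 + 1) - t ^ 2))
      (3 / 2 * (√(t ^ 4 + 1) - t ^ 2) - 1 / √(t ^ 4 + 1)) t := by
  have hpos : 0 < t ^ 4 + 1 := by positivity
  have h1 : HasDerivAt (fun t : ℝ => t ^ 4 + 1) (4 * t ^ 3) t := by
    simpa using (hasDerivAt_pow 4 t).add_const 1
  have h2 : HasDerivAt (fun t : ℝ => t ^ 2) (2 * t) t := by
    simpa using hasDerivAt_pow 2 t
  refine (((hasDerivAt_id' t).div_const 2).fun_mul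
    ((h1.sqrt hpos.ne').fun_sub h2)).congr_deriv ?_
  have hs : √(t ^ 4 + 1) ≠ 0 := by positivity
  have hsq : √(t ^ 4 + 1) ^ 2 = t ^ 4 + 1 := Real.sq_sqrt hpos.le
  field_simp
  linear_combination (-4) * hsq

lemma tendsto_primitive :
    Filter.Tendsto (fun t : ℝ => t / 2 * (√(t ^ 4 + 1) - t ^ 2)) Filter.atTop (nhds 0) := by
  have hlim : Filter.Tendsto (fun t : ℝ => (1 / 4) * t⁻¹) Filter.atTop (nhds 0) := by
    simpa using tendsto_inv_atTop_zero.const_mul (1 / 4 : ℝ)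
  refine squeeze_zero' ?_ ?_ hlim
  · filter_upwards [Filter.eventually_gt_atTop 0] with t ht
    exact mul_nonneg (by positivity) (sub_nonneg.2 (sq_le_sqrt t))
  · filter_upwards [Filter.eventually_gt_atTop 0] with t ht
    calc t / 2 * (√(t ^ 4 + 1) - t ^ 2) ≤ t / 2 * ((1 / 2) * t ^ (-2 : ℝ)) := by
          gcongr
          exact sqrt_sub_sq_le ht
      _ = (1 / 4) * t⁻¹ := by
          rw [Real.rpow_neg ht.le, Real.rpow_two]
          field_simp
          norm_num

lemma f_eq {x : ℝ} (hx : 0 < x) :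
    f x = 2 * x * ∫ t in Set.Ioi x, (√(t ^ 4 + 1) - t ^ 2) := by
  have hA := (integrableOn_sqrt_sub_sq hx).const_mul (3 / 2)
  have hB := integrableOn_inv_sqrt hx
  have h := integral_Ioi_of_hasDerivAt_of_tendsto' (fun t _ => hasDerivAt_primitive t)
    (hA.sub hB) tendsto_primitive
  rw [integral_sub hA hB, integral_const_mul] at h
  rw [f]
  linear_combination -(4 / 3) * x * h

lemma f_nonneg {x : ℝ} (hx : 0 < x) : 0 ≤ f x := by
  rw [f_eq hx]
  have : 0 ≤ ∫ t in Set.Ioi x, (√(t ^ 4 + 1) - t ^ 2) :=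
    integral_nonneg fun t => sub_nonneg.2 (sq_le_sqrt t)
  positivity

lemma f_le_one {x : ℝ} (hx : 0 < x) : f x ≤ 1 := by
  rw [f_eq hx]
  have hlt : (-2 : ℝ) < -1 := by norm_num
  have h : ∫ t in Set.Ioi x, (√(t ^ 4 + 1) - t ^ 2) ≤
      ∫ t in Set.Ioi x, (1 / 2) * t ^ (-2 : ℝ) :=
    setIntegral_mono_on (integrableOn_sqrt_sub_sq hx)
      ((integrableOn_Ioi_rpow_of_lt hlt hx).const_mul (1 / 2)) measurableSet_Ioi
      fun t ht => sqrt_sub_sq_le (hx.trans ht)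
  have hval : ∫ t in Set.Ioi x, (1 / 2) * t ^ (-2 : ℝ) = 1 / (2 * x) := by
    rw [integral_const_mul, integral_Ioi_rpow_of_lt hlt hx,
      show (-2 : ℝ) + 1 = -1 by norm_num, Real.rpow_neg_one]
    field_simp
  rw [hval] at h
  calc _ ≤ 2 * x * (1 / (2 * x)) := by gcongr
    _ = 1 := by field_simp

end HorizonSandwich

/-- The Born-Infeld horizon radius is sandwiched between the outer
Reissner-Nordstrom horizon radius `x₊ = (1/2)(x_s + sqrt(x_s^2 - 4 x_q^2))` and the
Schwarzschild radius `x_s`. -/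
theorem horizon_sandwich (xs xq : ℝ) (hs : 0 < xs) (hq : 0 < xq)
    (hext : xs ^ 2 ≥ 4 * xq ^ 2) (xh : ℝ) (hxh : xh ≥ xs / 2)
    (hzero : g₀₀ xs xq xh = 0) :
    (1 / 2) * (xs + Real.sqrt (xs ^ 2 - 4 * xq ^ 2)) ≤ xh ∧ xh ≤ xs := by
  have hx : 0 < xh := by linarith
  have h0 := HorizonSandwich.f_nonneg hx
  have h1 := HorizonSandwich.f_le_one hx
  have hquad : xh ^ 2 - xs * xh + xq ^ 2 * f xh = 0 := by
    have : xh ^ 2 * g₀₀ xs xq xh = xh ^ 2 - xs * xh + xq ^ 2 * f xh := by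
      rw [g₀₀]
      field_simp
    rw [← this, hzero, mul_zero]
  constructor
  · have : √(xs ^ 2 - 4 * xq ^ 2) ≤ 2 * xh - xs :=
      Real.sqrt_le_iff.2 ⟨by linarith, by nlinarith [mul_le_mul_of_nonneg_left h1 (sq_nonneg xq)]⟩
    linarith
  · have : 0 ≤ xq ^ 2 * f xh := by positivity
    have : xh * xh ≤ xs * xh := by nlinarith
    exact le_of_mul_le_mul_right this hx
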